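/- arXiv:2501.19193 — 2 statements merged into one kernel-verified Lean document; each statement's English description precedes it below -/
import Mathlib

section
/- For every integer n ≥ 2, the convex hull of H_n ∩ ℤ² has at most C·n^{1/3}·(log₂ n + 2) vertices, where C = 2^{7/3}·π^{2/3}. -/
noncomputable section

/-- The closed region on and above the positive branch of the hyperbola `x*y = n`. -/
def Hset (n : ℝ) : Set (ℝ × ℝ) := {q | 0 ≤ q.1 ∧ 0 ≤ q.2 ∧ n ≤ q.1 * q.2}

/-- The integer lattice `ℤ² ⊂ ℝ²`. -/
def intLattice : Set (ℝ × ℝ) := {q | ∃ a b : ℤ, q = ((a : ℝ), (b : ℝ))}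

/-!
`H_n ∩ ℤ²` is stable under adding `(1, 0)` and `(0, 1)`, so its hull is an upper set and the
vertices are minimal points of the hull. Hence they are pairwise incomparable lattice points, and a
vertex `(x, y)` satisfies `x (y - 1) < n` and `(x - 1) y < n`. Split the vertices dyadically by
`2 ^ j ≤ x < 2 ^ (j + 1)`; as `1 ≤ x < n + 1 ≤ 2 n`, there are at most `log₂ n + 2` blocks.

Order the vertices of a block by `x`. By strict convexity the steps `(a, -b)` between consecutive
vertices are distinct, and `a, b > 0`. The `a`'s add up to at most `2 ^ j` and the `b`'s to at most
`n / 2 ^ j`. A set of `k` pairs of positive integers with coordinate sums `A` and `B` has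
`k ^ 3 ≤ 27 A B`: at most `k / 3` pairs have first coordinate above `3 A / k`, at most `k / 3` have
second coordinate above `3 B / k`, and the others lie in a box of area `9 A B / k ^ 2`. Hence a
block has at most `3 n ^ (1 / 3) + 1` vertices.
-/

open Finset

lemma mul_card_filter_mul_sum_lt_le {ι R : Type*} [CommRing R] [LinearOrder R]
    [IsStrictOrderedRing R] {s : Finset ι} {a : ι → R} (ha : ∀ i ∈ s, 0 < a i) (m : ℕ) :
    m * #{i ∈ s | m * ∑ j ∈ s, a j < #s * a i} ≤ #s := by
  rcases s.eq_empty_or_nonempty with rfl | hs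
  · simp
  have hsum : 0 < ∑ j ∈ s, a j := sum_pos ha hs
  set t := {i ∈ s | m * ∑ j ∈ s, a j < #s * a i}
  have hmarkov : #t • (m * ∑ j ∈ s, a j) ≤ ∑ i ∈ t, #s * a i :=
    card_nsmul_le_sum _ _ _ fun i hi => (mem_filter.1 hi).2.le
  have hsub : ∑ i ∈ t, a i ≤ ∑ i ∈ s, a i :=
    sum_le_sum_of_subset_of_nonneg (filter_subset _ _) fun i hi _ => (ha i hi).le
  rw [← mul_sum, nsmul_eq_mul] at hmarkov
  have hle : (m * #t : R) * ∑ j ∈ s, a j ≤ #s * ∑ j ∈ s, a j :=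
    calc (m * #t : R) * ∑ j ∈ s, a j = #t * (m * ∑ j ∈ s, a j) := by ring
      _ ≤ #s * ∑ i ∈ t, a i := hmarkov
      _ ≤ #s * ∑ j ∈ s, a j := by gcongr
  exact_mod_cast le_of_mul_le_mul_right hle hsum

theorem card_pow_three_le_mul_sum_mul_sum (s : Finset (ℤ × ℤ))
    (hs : ∀ p ∈ s, 0 < p.1 ∧ 0 < p.2) :
    (#s : ℤ) ^ 3 ≤ 27 * ((∑ p ∈ s, p.1) * ∑ p ∈ s, p.2) := by
  rcases s.eq_empty_or_nonempty with rfl | hne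
  · simp
  set A := ∑ p ∈ s, p.1
  set B := ∑ p ∈ s, p.2
  have hk : (0 : ℤ) < #s := by exact_mod_cast hne.card_pos
  have hA : 0 ≤ A := sum_nonneg fun p hp => (hs p hp).1.le
  have hB : 0 ≤ B := sum_nonneg fun p hp => (hs p hp).2.le
  set box := Icc 1 (3 * A / #s) ×ˢ Icc 1 (3 * B / #s)
  have hcover : s ⊆ {p ∈ s | 3 * A < #s * p.1} ∪ {p ∈ s | 3 * B < #s * p.2} ∪ box := by
    intro p hp
    simp only [box, mem_union, mem_filter, mem_product, mem_Icc, hp, true_and,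
      Int.le_ediv_iff_mul_le hk, mul_comm _ (#s : ℤ)]
    have := hs p hp
    grind
  have hbox : (#box : ℤ) = 3 * A / #s * (3 * B / #s) := by
    have hA' : 0 ≤ 3 * A / #s := by positivity
    have hB' : 0 ≤ 3 * B / #s := by positivity
    simp [box, hA', hB']
  have hbox_area : (#box : ℤ) * #s ^ 2 ≤ 9 * (A * B) :=
    calc (#box : ℤ) * #s ^ 2 = (3 * A / #s * #s) * (3 * B / #s * #s) := by rw [hbox]; ring
      _ ≤ (3 * A) * (3 * B) :=
        mul_le_mul (Int.ediv_mul_le _ hk.ne') (Int.ediv_mul_le _ hk.ne') (by positivity)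
          (by positivity)
      _ = 9 * (A * B) := by ring
  have hthird : #s ≤ 3 * #box := by
    have hfst : 3 * #{p ∈ s | 3 * A < #s * p.1} ≤ #s :=
      mul_card_filter_mul_sum_lt_le (fun p hp => (hs p hp).1) 3
    have hsnd : 3 * #{p ∈ s | 3 * B < #s * p.2} ≤ #s :=
      mul_card_filter_mul_sum_lt_le (fun p hp => (hs p hp).2) 3
    have hunion := (card_le_card hcover).trans
      ((card_union_le _ _).trans (Nat.add_le_add_right (card_union_le _ _) _))
    omega
  calc (#s : ℤ) ^ 3 = #s * #s ^ 2 := by ring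
    _ ≤ (3 * #box : ℤ) * #s ^ 2 := by gcongr; exact_mod_cast hthird
    _ ≤ 27 * (A * B) := by linarith

lemma exists_strictMonoOn_comp_of_injOn {α β : Type*} [LinearOrder β] {s : Finset α} {g : α → β}
    (hg : Set.InjOn g s) {k : ℕ} (hk : #s = k + 1) :
    ∃ p : ℕ → α, (∀ i, p i ∈ s) ∧ StrictMonoOn (g ∘ p) (Set.Iic k) := by
  classical
  set e := (s.image g).orderEmbOfFin ((card_image_of_injOn hg).trans hk)
  have he (i : Fin (k + 1)) : ∃ a ∈ s, g a = e i := mem_image.1 (orderEmbOfFin_mem _ _ i)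
  choose p hp hgp using he
  refine ⟨fun i => p (Fin.ofNat (k + 1) i), fun i => hp _, fun i hi j hj hij => ?_⟩
  simp only [Function.comp_apply, hgp, OrderEmbedding.lt_iff_lt, Fin.lt_def, Fin.val_ofNat]
  rw [Set.mem_Iic] at hi hj
  rwa [Nat.mod_eq_of_lt (by omega), Nat.mod_eq_of_lt (by omega)]

/-- A set of points of the plane on the graph of a strictly decreasing and strictly convex
function, written without division. The antichain condition in the product order says
both that the points form a graph and that it descends. -/
structure IsConvexStaircase {R : Type*} [Ring R] [LinearOrder R] (P : Set (R × R)) : Prop where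
  isAntichain : IsAntichain (· ≤ ·) P
  lt_chord : ∀ p ∈ P, ∀ q ∈ P, ∀ r ∈ P, p.1 < q.1 → q.1 < r.1 →
    (q.2 - p.2) * (r.1 - p.1) < (r.2 - p.2) * (q.1 - p.1)

namespace IsConvexStaircase

section Ring

variable {R : Type*} [Ring R] [LinearOrder R] {P Q : Set (R × R)}

lemma mono (hQ : IsConvexStaircase Q) (h : P ⊆ Q) : IsConvexStaircase P where
  isAntichain := hQ.isAntichain.subset h
  lt_chord p hp q hq r hr := hQ.lt_chord p (h hp) q (h hq) r (h hr)

lemma snd_lt_snd (hP : IsConvexStaircase P) {p q : R × R} (hp : p ∈ P) (hq : q ∈ P)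
    (h : p.1 < q.1) : q.2 < p.2 := by
  by_contra! hle
  exact h.ne (congrArg Prod.fst (hP.isAntichain.eq hp hq ⟨h.le, hle⟩))

lemma injOn_fst (hP : IsConvexStaircase P) : P.InjOn Prod.fst := fun p hp q hq h =>
  (le_total p.2 q.2).elim (fun hle => hP.isAntichain.eq hp hq ⟨h.le, hle⟩)
    fun hle => (hP.isAntichain.eq hq hp ⟨h.ge, hle⟩).symm

lemma preimage_intCast [IsStrictOrderedRing R] (hP : IsConvexStaircase P) :
    IsConvexStaircase (Prod.map ((↑) : ℤ → R) (↑) ⁻¹' P) where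
  isAntichain := hP.isAntichain.preimage (Int.cast_injective.prodMap Int.cast_injective)
    fun _ _ h => ⟨Int.cast_le.2 h.1, Int.cast_le.2 h.2⟩
  lt_chord p hp q hq r hr hpq hqr := by
    have h := hP.lt_chord _ hp _ hq _ hr (Int.cast_lt.2 hpq) (Int.cast_lt.2 hqr)
    simp only [Prod.map_fst, Prod.map_snd] at h
    exact_mod_cast h

end Ring

section CommRing

variable {R : Type*} [CommRing R] [LinearOrder R] [IsStrictOrderedRing R] {P : Set (R × R)}

lemma sub_ne_sub (hP : IsConvexStaircase P) {p q r s : R × R}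
    (hp : p ∈ P) (hq : q ∈ P) (hr : r ∈ P) (hs : s ∈ P) (hpq : p.1 < q.1) (hqs : q.1 < s.1)
    (hpr : p.1 < r.1) (hrs : r.1 < s.1) : q - p ≠ s - r := by
  -- Otherwise `p, q, s, r` is a parallelogram, so `q` and `r` cannot both lie below its
  -- diagonal from `p` to `s`.
  intro h
  have hq_chord := hP.lt_chord p hp q hq s hs hpq hqs
  have hr_chord := hP.lt_chord p hp r hr s hs hpr hrs
  obtain rfl : r = s - (q - p) := by rw [h]; abel
  simp only [Prod.fst_sub, Prod.snd_sub] at hr_chord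
  linarith

lemma injOn_step (hP : IsConvexStaircase P) {p : ℕ → R × R} (hpP : ∀ i, p i ∈ P) {k : ℕ}
    (hp : StrictMonoOn (Prod.fst ∘ p) (Set.Iic k)) :
    Set.InjOn (fun i => p (i + 1) - p i) (Set.Iio k) := by
  have hne {i j : ℕ} (hij : i < j) (hj : j < k) : p (i + 1) - p i ≠ p (j + 1) - p j := by
    have hlt {l m : ℕ} (hlm : l < m) (hm : m ≤ k) : (p l).1 < (p m).1 :=
      hp (hlm.le.trans hm) hm hlm
    exact hP.sub_ne_sub (hpP _) (hpP _) (hpP _) (hpP _) (hlt (by omega) (by omega))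
      (hlt (by omega) (by omega)) (hlt (by omega) (by omega)) (hlt (by omega) (by omega))
  intro i hi j hj h
  by_contra hij
  exact (Ne.lt_or_gt hij).elim (fun hij => hne hij hj h) fun hji => hne hji hi h.symm

end CommRing

lemma pow_three_le_of_strictMonoOn {P : Set (ℤ × ℤ)} (hP : IsConvexStaircase P)
    {p : ℕ → ℤ × ℤ} (hpP : ∀ i, p i ∈ P) {k : ℕ}
    (hp : StrictMonoOn (Prod.fst ∘ p) (Set.Iic k)) :
    (k : ℤ) ^ 3 ≤ 27 * (((p k).1 - (p 0).1) * ((p 0).2 - (p k).2)) := by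
  set step : ℕ → ℤ × ℤ := fun i => ((p (i + 1)).1 - (p i).1, (p i).2 - (p (i + 1)).2)
  have hinj : Set.InjOn step (range k) := by
    intro i hi j hj h
    simp only [step, Prod.mk.injEq] at h
    rw [coe_range] at hi hj
    exact hP.injOn_step hpP hp hi hj (Prod.ext h.1 (by simp only [Prod.snd_sub]; omega))
  have hpos : ∀ s ∈ (range k).image step, 0 < s.1 ∧ 0 < s.2 := by
    simp only [forall_mem_image, mem_range, step, sub_pos]
    intro i hi
    have hlt : (p i).1 < (p (i + 1)).1 := hp hi.le (Nat.succ_le_of_lt hi) i.lt_succ_self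
    exact ⟨hlt, hP.snd_lt_snd (hpP i) (hpP (i + 1)) hlt⟩
  have hcard := card_pow_three_le_mul_sum_mul_sum _ hpos
  rwa [card_image_of_injOn hinj, sum_image hinj, sum_image hinj,
    sum_range_sub (fun i => (p i).1), sum_range_sub' (fun i => (p i).2), card_range] at hcard

theorem card_sub_one_pow_three_le {P : Finset (ℤ × ℤ)} (hP : IsConvexStaircase (P : Set (ℤ × ℤ)))
    (hne : P.Nonempty) {u v : ℤ × ℤ} (hPuv : P ⊆ Icc u v) :
    (#P - 1 : ℤ) ^ 3 ≤ 27 * ((v.1 - u.1) * (v.2 - u.2)) := by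
  obtain ⟨k, hk⟩ : ∃ k, #P = k + 1 := Nat.exists_eq_add_of_le' hne.card_pos
  obtain ⟨p, hpP, hp⟩ := exists_strictMonoOn_comp_of_injOn hP.injOn_fst hk
  obtain ⟨hu₀, hv₀⟩ := mem_Icc.1 (hPuv (hpP 0))
  obtain ⟨huk, hvk⟩ := mem_Icc.1 (hPuv (hpP k))
  have hx : (p k).1 - (p 0).1 ≤ v.1 - u.1 := sub_le_sub hvk.1 hu₀.1
  have hy : (p 0).2 - (p k).2 ≤ v.2 - u.2 := sub_le_sub hv₀.2 huk.2
  have hx₀ : 0 ≤ (p k).1 - (p 0).1 :=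
    sub_nonneg.2 (hp.monotoneOn k.zero_le Set.self_mem_Iic k.zero_le)
  have hvu : 0 ≤ v.2 - u.2 := sub_nonneg.2 (hu₀.2.trans hv₀.2)
  calc (#P - 1 : ℤ) ^ 3 = k ^ 3 := by rw [hk]; push_cast; ring
    _ ≤ 27 * (((p k).1 - (p 0).1) * ((p 0).2 - (p k).2)) := hP.pow_three_le_of_strictMonoOn hpP hp
    _ ≤ 27 * ((v.1 - u.1) * (v.2 - u.2)) := by
      gcongr 27 * ?_
      exact mul_le_mul_of_nonneg hx hy hx₀ hvu

end IsConvexStaircase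

lemma eq_of_le_of_mem_extremePoints {𝕜 E : Type*} [Field 𝕜] [LinearOrder 𝕜]
    [IsStrictOrderedRing 𝕜] [AddCommGroup E] [PartialOrder E] [IsOrderedAddMonoid E] [Module 𝕜 E]
    {K : Set E} (hK : IsUpperSet K) {p q : E} (hp : p ∈ K) (hq : q ∈ K.extremePoints 𝕜)
    (h : p ≤ q) : p = q := by
  have hreflect : q + (q - p) ∈ K := hK (le_add_of_nonneg_right (sub_nonneg.2 h)) hq.1
  have hmid := mem_openSegment_sub_add (𝕜 := 𝕜) q (q - p)
  rw [sub_sub_cancel] at hmid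
  exact hq.2 hp hreflect hmid

theorem isConvexStaircase_extremePoints {𝕜 : Type*} [Field 𝕜] [LinearOrder 𝕜]
    [IsStrictOrderedRing 𝕜] {K : Set (𝕜 × 𝕜)} (hK : IsUpperSet K) (hconv : Convex 𝕜 K) :
    IsConvexStaircase (K.extremePoints 𝕜) where
  isAntichain p hp q hq hne hle := hne (eq_of_le_of_mem_extremePoints hK hp.1 hq hle)
  lt_chord p hp q hq r hr hpq hqr := by
    by_contra! hchord
    have hpr : 0 < r.1 - p.1 := sub_pos.2 (hpq.trans hqr)
    set t := (q.1 - p.1) / (r.1 - p.1)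
    have ht : t ∈ Set.Ioo 0 1 :=
      ⟨div_pos (sub_pos.2 hpq) hpr, (div_lt_one hpr).2 (sub_lt_sub_right hqr _)⟩
    have htr : t * (r.1 - p.1) = q.1 - p.1 := div_mul_cancel₀ _ hpr.ne'
    set c := AffineMap.lineMap p r t with hc_def
    have hc : c ∈ openSegment 𝕜 p r := lineMap_mem_openSegment 𝕜 p r ht
    have hcq : c ≤ q := by
      rw [hc_def, AffineMap.lineMap_apply_module', Prod.le_def]
      constructor
      · exact (sub_eq_iff_eq_add.1 htr.symm).ge
      · rw [← htr, mul_left_comm, ← mul_assoc] at hchord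
        exact le_sub_iff_add_le.1 (le_of_mul_le_mul_right hchord hpr)
    have hcq' : c = q :=
      eq_of_le_of_mem_extremePoints hK (hconv.openSegment_subset hp.1 hr.1 hc) hq hcq
    exact hpq.ne (congrArg Prod.fst (hq.2 hp.1 hr.1 (hcq' ▸ hc)))

lemma add_smul_mem_convexHull {𝕜 E : Type*} [Field 𝕜] [LinearOrder 𝕜] [IsStrictOrderedRing 𝕜]
    [Archimedean 𝕜] [AddCommGroup E] [Module 𝕜 E] {A : Set E} {v : E} (hA : ∀ a ∈ A, a + v ∈ A)
    {p : E} (hp : p ∈ convexHull 𝕜 A) {t : 𝕜} (ht : 0 ≤ t) : p + t • v ∈ convexHull 𝕜 A := by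
  have hconv := convex_convexHull 𝕜 A
  have hadd : convexHull 𝕜 A ⊆ (· + v) ⁻¹' convexHull 𝕜 A :=
    convexHull_min (fun a ha => subset_convexHull 𝕜 A (hA a ha)) (hconv.translate_preimage_left v)
  have hnsmul (m : ℕ) : p + m • v ∈ convexHull 𝕜 A := by
    induction m with
    | zero => simpa using hp
    | succ m ih => rw [succ_nsmul, ← add_assoc]; exact hadd ih
  obtain ⟨m, hm⟩ := exists_nat_gt t
  have hm₀ : (0 : 𝕜) < m := ht.trans_lt hm
  have h := hconv.add_smul_mem hp (hnsmul m) ⟨div_nonneg ht hm₀.le, (div_le_one hm₀).2 hm.le⟩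
  rwa [← Nat.cast_smul_eq_nsmul 𝕜, smul_smul, div_mul_cancel₀ _ hm₀.ne'] at h

lemma intCast_mem_Hset_inter_intLattice {n : ℝ} {p : ℤ × ℤ} :
    Prod.map (↑) (↑) p ∈ Hset n ∩ intLattice ↔ 0 ≤ p.1 ∧ 0 ≤ p.2 ∧ n ≤ p.1 * p.2 := by
  have hp : Prod.map (↑) (↑) p ∈ intLattice := ⟨p.1, p.2, rfl⟩
  simp [Hset, hp]

lemma isUpperSet_Hset (n : ℝ) : IsUpperSet (Hset n) := fun _ _ h ⟨hx, hy, hxy⟩ =>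
  ⟨hx.trans h.1, hy.trans h.2, hxy.trans (mul_le_mul h.1 h.2 hy (hx.trans h.1))⟩

lemma add_mem_intLattice {p q : ℝ × ℝ} (hp : p ∈ intLattice) (hq : q ∈ intLattice) :
    p + q ∈ intLattice := by
  obtain ⟨⟨a, b, rfl⟩, c, d, rfl⟩ := hp, hq
  exact ⟨a + c, b + d, by simp⟩

lemma isUpperSet_convexHull_Hset_inter_intLattice (n : ℝ) :
    IsUpperSet (convexHull ℝ (Hset n ∩ intLattice)) := by
  have hadd {v : ℝ × ℝ} (hv : v ∈ intLattice) (hv₀ : 0 ≤ v) :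
      ∀ q ∈ Hset n ∩ intLattice, q + v ∈ Hset n ∩ intLattice := fun q hq =>
    ⟨isUpperSet_Hset n (le_add_of_nonneg_right hv₀) hq.1, add_mem_intLattice hq.2 hv⟩
  have hright := hadd (v := (1, 0)) ⟨1, 0, by simp⟩ (by simp [Prod.le_def])
  have hup := hadd (v := (0, 1)) ⟨0, 1, by simp⟩ (by simp [Prod.le_def])
  intro p q hpq hp
  have hq := add_smul_mem_convexHull hup
    (add_smul_mem_convexHull hright hp (sub_nonneg.2 hpq.1)) (sub_nonneg.2 hpq.2)
  convert hq using 1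
  ext <;> simp

/-- The vertices of `conv (H_n ∩ ℤ²)`, as a set of integer points. -/
def latticeVertices (n : ℝ) : Set (ℤ × ℤ) :=
  Prod.map (↑) (↑) ⁻¹' (convexHull ℝ (Hset n ∩ intLattice)).extremePoints ℝ

lemma image_latticeVertices (n : ℝ) : Prod.map (↑) (↑) '' latticeVertices n =
    (convexHull ℝ (Hset n ∩ intLattice)).extremePoints ℝ := by
  refine Set.image_preimage_eq_of_subset fun q hq => ?_
  obtain ⟨-, a, b, rfl⟩ := extremePoints_convexHull_subset hq
  exact ⟨(a, b), rfl⟩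

lemma isConvexStaircase_latticeVertices (n : ℝ) : IsConvexStaircase (latticeVertices n) :=
  (isConvexStaircase_extremePoints (isUpperSet_convexHull_Hset_inter_intLattice n)
    (convex_convexHull ℝ _)).preimage_intCast

section latticeVertices

variable {n : ℝ} {p q : ℤ × ℤ}

lemma le_mul_of_mem_latticeVertices (hp : p ∈ latticeVertices n) :
    0 ≤ p.1 ∧ 0 ≤ p.2 ∧ n ≤ p.1 * p.2 :=
  intCast_mem_Hset_inter_intLattice.1 (extremePoints_convexHull_subset hp)

lemma pos_of_mem_latticeVertices (hn : 0 < n) (hp : p ∈ latticeVertices n) :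
    0 < p.1 ∧ 0 < p.2 := by
  obtain ⟨hx, hy, hxy⟩ := le_mul_of_mem_latticeVertices hp
  have hmul : 0 < p.1 * p.2 := by exact_mod_cast hn.trans_le hxy
  exact ⟨pos_of_mul_pos_left hmul hy, pos_of_mul_pos_right hmul hx⟩

lemma mul_lt_of_lt_of_mem_latticeVertices (hp : p ∈ latticeVertices n) (hq : 0 ≤ q) (hqp : q < p) :
    (q.1 * q.2 : ℝ) < n := by
  by_contra! hle
  have hmem : Prod.map (↑) (↑) q ∈ convexHull ℝ (Hset n ∩ intLattice) :=
    subset_convexHull ℝ _ (intCast_mem_Hset_inter_intLattice.2 ⟨hq.1, hq.2, hle⟩)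
  have hcast : Prod.map ((↑) : ℤ → ℝ) ((↑) : ℤ → ℝ) q ≤ Prod.map (↑) (↑) p :=
    ⟨Int.cast_le.2 hqp.le.1, Int.cast_le.2 hqp.le.2⟩
  have heq := eq_of_le_of_mem_extremePoints (isUpperSet_convexHull_Hset_inter_intLattice n) hmem
    hp hcast
  exact hqp.ne ((Int.cast_injective.prodMap Int.cast_injective) heq)

lemma mul_sub_one_lt_of_mem_latticeVertices (hn : 0 < n) (hp : p ∈ latticeVertices n) :
    (p.1 * (p.2 - 1) : ℝ) < n := by
  obtain ⟨hx, hy⟩ := pos_of_mem_latticeVertices hn hp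
  simpa using mul_lt_of_lt_of_mem_latticeVertices hp (q := (p.1, p.2 - 1))
    ⟨hx.le, Int.le_sub_one_of_lt hy⟩ (Prod.mk_lt_mk_iff_right.2 (sub_one_lt p.2))

lemma sub_one_mul_lt_of_mem_latticeVertices (hn : 0 < n) (hp : p ∈ latticeVertices n) :
    ((p.1 - 1) * p.2 : ℝ) < n := by
  obtain ⟨hx, hy⟩ := pos_of_mem_latticeVertices hn hp
  simpa using mul_lt_of_lt_of_mem_latticeVertices hp (q := (p.1 - 1, p.2))
    ⟨Int.le_sub_one_of_lt hx, hy.le⟩ (Prod.mk_lt_mk_iff_left.2 (sub_one_lt p.1))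

lemma mem_Icc_of_mem_latticeVertices (hn : 0 < n) (hp : p ∈ latticeVertices n) :
    p ∈ Set.Icc 1 (⌊n⌋ + 1, ⌊n⌋ + 1) := by
  obtain ⟨hx, hy⟩ := pos_of_mem_latticeVertices hn hp
  have hx₁ : (1 : ℝ) ≤ p.1 := by exact_mod_cast hx
  have hy₁ : (1 : ℝ) ≤ p.2 := by exact_mod_cast hy
  have hxn : p.1 - 1 ≤ ⌊n⌋ := Int.le_floor.2 <| by
    push_cast
    exact (le_mul_of_one_le_right (sub_nonneg.2 hx₁) hy₁).trans
      (sub_one_mul_lt_of_mem_latticeVertices hn hp).le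
  have hyn : p.2 - 1 ≤ ⌊n⌋ := Int.le_floor.2 <| by
    push_cast
    exact (le_mul_of_one_le_left (sub_nonneg.2 hy₁) hx₁).trans
      (mul_sub_one_lt_of_mem_latticeVertices hn hp).le
  exact ⟨⟨hx, hy⟩, sub_le_iff_le_add.1 hxn, sub_le_iff_le_add.1 hyn⟩

lemma finite_latticeVertices (hn : 0 < n) : (latticeVertices n).Finite :=
  (Set.finite_Icc _ _).subset fun _ => mem_Icc_of_mem_latticeVertices hn

lemma card_le_of_subset_latticeVertices (hn : 0 < n) {P : Finset (ℤ × ℤ)}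
    (hP : (P : Set (ℤ × ℤ)) ⊆ latticeVertices n) {a : ℤ} (ha : 0 < a)
    (hPa : ∀ p ∈ P, p.1 ∈ Icc a (2 * a)) : (#P : ℝ) ≤ 3 * n ^ (1 / 3 : ℝ) + 1 := by
  rcases P.eq_empty_or_nonempty with rfl | hne
  · simp only [card_empty, Nat.cast_zero]
    positivity
  have ha' : (0 : ℝ) < a := by exact_mod_cast ha
  have hbox : P ⊆ Icc (a, 1) (2 * a, ⌊n / a⌋ + 1) := by
    intro p hp
    obtain ⟨hap, hpa⟩ := mem_Icc.1 (hPa p hp)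
    have hy : 1 ≤ p.2 := (pos_of_mem_latticeVertices hn (hP hp)).2
    have hy' : (0 : ℝ) ≤ p.2 - 1 := by exact_mod_cast sub_nonneg.2 hy
    have hheight : p.2 - 1 ≤ ⌊n / a⌋ := by
      rw [Int.le_floor, le_div_iff₀ ha']
      calc ((p.2 - 1 : ℤ) : ℝ) * a = a * (p.2 - 1) := by push_cast; ring
        _ ≤ p.1 * (p.2 - 1) := by gcongr
        _ ≤ n := (mul_sub_one_lt_of_mem_latticeVertices hn (hP hp)).le
    exact mem_Icc.2 ⟨⟨hap, hy⟩, hpa, sub_le_iff_le_add.1 hheight⟩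
  have hcard := ((isConvexStaircase_latticeVertices n).mono hP).card_sub_one_pow_three_le hne hbox
  have hcube : (#P - 1 : ℝ) ^ 3 ≤ (3 * n ^ (1 / 3 : ℝ)) ^ 3 :=
    calc (#P - 1 : ℝ) ^ 3 ≤ 27 * ((2 * a - a) * (⌊n / a⌋ + 1 - 1)) := by exact_mod_cast hcard
      _ = 27 * (a * ⌊n / a⌋) := by ring
      _ ≤ 27 * (a * (n / a)) := by gcongr; exact Int.floor_le _
      _ = 27 * n := by rw [mul_div_cancel₀ _ ha'.ne']
      _ = (3 * n ^ (1 / 3 : ℝ)) ^ 3 := by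
        rw [mul_pow, ← Real.rpow_mul_natCast hn.le]
        norm_num
  exact sub_le_iff_le_add.1 (le_of_pow_le_pow_left₀ three_ne_zero (by positivity) hcube)

lemma log_toNat_fst_lt_of_mem_latticeVertices (hn : 1 ≤ n) (hp : p ∈ latticeVertices n) :
    Nat.log 2 p.1.toNat < ⌊Real.logb 2 n⌋₊ + 2 := by
  obtain ⟨⟨hx, -⟩, hxn, -⟩ := mem_Icc_of_mem_latticeVertices (zero_lt_one.trans_le hn) hp
  have hx' : 1 ≤ p.1 := hx
  have hcast : ((p.1.toNat : ℤ) : ℝ) = p.1 := by rw [Int.toNat_of_nonneg (by omega)]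
  have hxn' : (p.1.toNat : ℝ) ≤ 2 * n :=
    calc (p.1.toNat : ℝ) = p.1 := hcast
      _ ≤ ⌊n⌋ + 1 := by exact_mod_cast hxn
      _ ≤ 2 * n := by linarith [Int.floor_le n]
  have hlog : (Nat.log 2 p.1.toNat : ℝ) ≤ Real.logb 2 n + 1 :=
    calc (Nat.log 2 p.1.toNat : ℝ) ≤ Real.logb 2 p.1.toNat := Real.natLog_le_logb _ 2
      _ ≤ Real.logb 2 (2 * n) :=
        Real.logb_le_logb_of_le one_lt_two (by exact_mod_cast (by omega : 0 < p.1.toNat)) hxn'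
      _ = Real.logb 2 n + 1 := by
        rw [Real.logb_mul two_ne_zero (by positivity), Real.logb_self_eq_one one_lt_two, add_comm]
  have hfloor := Nat.le_floor hlog
  rw [Nat.floor_add_one (Real.logb_nonneg one_lt_two hn)] at hfloor
  omega

theorem ncard_latticeVertices_le (hn : 1 ≤ n) :
    ((latticeVertices n).ncard : ℝ) ≤ (3 * n ^ (1 / 3 : ℝ) + 1) * (Real.logb 2 n + 2) := by
  have hn₀ : 0 < n := zero_lt_one.trans_le hn
  set V := (finite_latticeVertices hn₀).toFinset
  have hV {p : ℤ × ℤ} (hp : p ∈ V) : p ∈ latticeVertices n := (Set.Finite.mem_toFinset _).1 hp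
  have hblock : ∀ j ∈ range (⌊Real.logb 2 n⌋₊ + 2),
      #{p ∈ V | Nat.log 2 p.1.toNat = j} ≤ ⌊3 * n ^ (1 / 3 : ℝ) + 1⌋₊ := by
    intro j _
    refine Nat.le_floor (card_le_of_subset_latticeVertices hn₀ (a := 2 ^ j)
      (fun p hp => hV (mem_filter.1 hp).1) (by positivity) fun p hp => ?_)
    obtain ⟨hpV, rfl⟩ := mem_filter.1 hp
    have hx : 0 < p.1 := (pos_of_mem_latticeVertices hn₀ (hV hpV)).1
    have hle : 2 ^ Nat.log 2 p.1.toNat ≤ p.1.toNat := Nat.pow_log_le_self 2 (by omega)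
    have hlt : p.1.toNat < 2 ^ (Nat.log 2 p.1.toNat + 1) :=
      Nat.lt_pow_succ_log_self one_lt_two _
    rw [pow_succ'] at hlt
    zify [hx.le] at hle hlt
    exact mem_Icc.2 (by constructor <;> omega)
  have hcard : #V ≤ ⌊3 * n ^ (1 / 3 : ℝ) + 1⌋₊ * #(range (⌊Real.logb 2 n⌋₊ + 2)) :=
    card_le_mul_card_image_of_maps_to
      (fun p hp => mem_range.2 (log_toNat_fst_lt_of_mem_latticeVertices hn (hV hp))) _ hblock
  have hlog : 0 ≤ Real.logb 2 n := Real.logb_nonneg one_lt_two hn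
  calc ((latticeVertices n).ncard : ℝ) = #V := by rw [Set.ncard_eq_toFinset_card _ _]
    _ ≤ ⌊3 * n ^ (1 / 3 : ℝ) + 1⌋₊ * (⌊Real.logb 2 n⌋₊ + 2) := by
      rw [card_range] at hcard
      exact_mod_cast hcard
    _ ≤ (3 * n ^ (1 / 3 : ℝ) + 1) * (Real.logb 2 n + 2) := by
      gcongr
      · exact Nat.floor_le (by positivity)
      · exact Nat.floor_le hlog

end latticeVertices

lemma four_le_two_rpow_mul_pi_rpow :
    4 ≤ (2 : ℝ) ^ ((7 : ℝ) / 3) * Real.pi ^ ((2 : ℝ) / 3) := by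
  have htwo : (2 : ℝ) ^ (2 : ℝ) ≤ 2 ^ ((7 : ℝ) / 3) :=
    Real.rpow_le_rpow_of_exponent_le one_le_two (by norm_num)
  have hpi : 1 ≤ Real.pi ^ ((2 : ℝ) / 3) :=
    Real.one_le_rpow (by linarith [Real.pi_gt_three]) (by norm_num)
  calc (4 : ℝ) = 2 ^ (2 : ℝ) * 1 := by norm_num
    _ ≤ 2 ^ ((7 : ℝ) / 3) * Real.pi ^ ((2 : ℝ) / 3) := by gcongr

theorem statement1_general {n : ℝ} (hn : 1 ≤ n) :
    (Set.extremePoints ℝ (convexHull ℝ (Hset n ∩ intLattice))).Finite ∧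
    ((Set.extremePoints ℝ (convexHull ℝ (Hset n ∩ intLattice))).ncard : ℝ) ≤
      4 * n ^ ((1 : ℝ) / 3) * (Real.logb 2 n + 2) := by
  have hlog : 0 ≤ Real.logb 2 n := Real.logb_nonneg one_lt_two hn
  have hroot : 1 ≤ n ^ ((1 : ℝ) / 3) := Real.one_le_rpow hn (by norm_num)
  rw [← image_latticeVertices,
    Set.ncard_image_of_injective _ (Int.cast_injective.prodMap Int.cast_injective)]
  refine ⟨(finite_latticeVertices (zero_lt_one.trans_le hn)).image _, ?_⟩
  calc ((latticeVertices n).ncard : ℝ)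
      ≤ (3 * n ^ ((1 : ℝ) / 3) + 1) * (Real.logb 2 n + 2) := ncard_latticeVertices_le hn
    _ ≤ 4 * n ^ ((1 : ℝ) / 3) * (Real.logb 2 n + 2) := by gcongr; linarith

/-- For every integer `n ≥ 2`, the convex hull of `H_n ∩ ℤ²` has at most
`C n^(1/3) (log₂ n + 2)` vertices, where `C = 2^(7/3) π^(2/3)`. -/
theorem statement1 (n : ℕ) (hn : 2 ≤ n) :
    (Set.extremePoints ℝ (convexHull ℝ (Hset n ∩ intLattice))).Finite ∧
    ((Set.extremePoints ℝ (convexHull ℝ (Hset n ∩ intLattice))).ncard : ℝ) ≤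
      2 ^ ((7 : ℝ) / 3) * Real.pi ^ ((2 : ℝ) / 3) * (n : ℝ) ^ ((1 : ℝ) / 3) *
        (Real.logb 2 n + 2) := by
  have hn₁ : (1 : ℝ) ≤ n := by exact_mod_cast one_le_two.trans hn
  have hlog : 0 ≤ Real.logb 2 n := Real.logb_nonneg one_lt_two hn₁
  exact (statement1_general hn₁).imp_right fun hle =>
    hle.trans (by gcongr; exact four_le_two_rpow_mul_pi_rpow)

end
end

section
/- Let a, b, c ∈ ℤ with Δ := √(b² − 4ac) a positive integer, let x₀, y₀ ∈ ℝ and n ∈ ℝ with n ≠ 0, and let h be the hyperbola {(x,y) ∈ ℝ² : a(x−x₀)² + b(x−x₀)(y−y₀) + c(y−y₀)² = n}. Let H be the closure of one of the two convex connected components of ℝ² \ h. Then the number of vertices (extreme points) of conv(H ∩ ℤ²) is at least 2·(|n|/Δ)^{1/3} − 2. -/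
/-!
Since `Δ` is a nonzero integer, the quadratic form is a product of two integral linear forms of
determinant `Δ`. In the affine coordinates `X`, `Y` given by these forms the region `H` is the
epigraph of `N / X` on `X > 0`, where `N = |n|`, while the lattice consists of vertical columns at
distance `d`, each with spacing `δ = Δ / d`.

If the second difference with step `d` of a convex function `f` is at least `2 * δ` at the abscissa
`X` of a column, then a suitable line through the lowest lattice point of that column above the
graph of `f` runs strictly below all the other lattice points above the graph, so this point is a
vertex. For `f X = N / X` this happens as soon as `X ≤ d * t`, where `t = (N / Δ) ^ (1 / 3)`, and
more than `t - 1` columns satisfy this bound. Exchanging `X` and `Y` gives more than `t - 1`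
vertices close to the other asymptote. For `t > 1` no vertex is counted twice, since such a vertex
would satisfy `N ≤ X * Y ≤ Δ * t ^ 2 < N`.
-/

noncomputable section

/-- The hyperbola `a(x-x₀)² + b(x-x₀)(y-y₀) + c(y-y₀)² = n`. -/
def hypSet (a b c : ℤ) (x₀ y₀ n : ℝ) : Set (ℝ × ℝ) :=
  {q | (a : ℝ) * (q.1 - x₀) ^ 2 + (b : ℝ) * (q.1 - x₀) * (q.2 - y₀)
      + (c : ℝ) * (q.2 - y₀) ^ 2 = n}

open Set

/-! ### Vertices of a convex hull -/

section HullVertices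

variable {E F : Type*} [AddCommGroup E] [Module ℝ E] [AddCommGroup F] [Module ℝ F]

/-- The vertices of the convex hull of a set of points. -/
def hullVertices (S : Set E) : Set E := (convexHull ℝ S).extremePoints ℝ

lemma hullVertices_subset (S : Set E) : hullVertices S ⊆ S := extremePoints_convexHull_subset

lemma hullVertices_image (f : E →ᵃ[ℝ] F) (hf : Function.Injective f) (S : Set E) :
    hullVertices (f '' S) = f '' hullVertices S := by
  have hseg : ∀ x y z : E, f z ∈ openSegment ℝ (f x) (f y) ↔ z ∈ openSegment ℝ x y := by
    intro x y z
    rw [← image_openSegment, hf.mem_set_image]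
  ext w
  simp only [hullVertices, ← AffineMap.image_convexHull, mem_image, mem_extremePoints]
  constructor
  · rintro ⟨⟨z, hz, rfl⟩, hext⟩
    refine ⟨z, ⟨hz, fun x hx y hy hzxy => ?_⟩, rfl⟩
    have := hext _ ⟨x, hx, rfl⟩ _ ⟨y, hy, rfl⟩ ((hseg x y z).2 hzxy)
    exact ⟨hf this.1, hf this.2⟩
  · rintro ⟨z, ⟨hz, hext⟩, rfl⟩
    refine ⟨⟨z, hz, rfl⟩, ?_⟩
    rintro _ ⟨x, hx, rfl⟩ _ ⟨y, hy, rfl⟩ hzxy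
    have := hext x hx y hy ((hseg x y z).1 hzxy)
    exact ⟨congrArg f this.1, congrArg f this.2⟩

lemma ncard_hullVertices_image (f : E →ᵃ[ℝ] F) (hf : Function.Injective f) (S : Set E) :
    (hullVertices (f '' S)).ncard = (hullVertices S).ncard := by
  rw [hullVertices_image f hf, ncard_image_of_injective _ hf]

lemma convex_insert_setOf_lt (l : E →ₗ[ℝ] ℝ) (v : E) : Convex ℝ (insert v {z | l v < l z}) := by
  rw [convex_iff_pairwise_pos]
  rintro x hx y hy hxy a b ha hb hab
  right
  obtain rfl : a = 1 - b := by linarith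
  simp only [mem_ofPred_eq, map_add, map_smul, smul_eq_mul]
  rcases hx with rfl | hx <;> rcases hy with rfl | hy
  · exact absurd rfl hxy
  all_goals simp only [mem_ofPred_eq] at *; nlinarith

lemma mem_hullVertices_of_forall_lt {S : Set E} {v : E} (l : E →ₗ[ℝ] ℝ) (hv : v ∈ S)
    (hmin : ∀ z ∈ S, z ≠ v → l v < l z) : v ∈ hullVertices S := by
  have hhull : convexHull ℝ S ⊆ insert v {z | l v < l z} :=
    convexHull_min (fun z hz => or_iff_not_imp_left.2 (hmin z hz)) (convex_insert_setOf_lt l v)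
  have hle : ∀ z ∈ convexHull ℝ S, l v ≤ l z := by
    intro z hz
    rcases hhull hz with rfl | hlt
    exacts [le_rfl, hlt.le]
  refine ⟨subset_convexHull ℝ S hv, ?_⟩
  rintro x hx y hy ⟨a, b, ha, hb, hab, hxy⟩
  refine (hhull hx).resolve_right fun hlt => ?_
  have hlx : a * l v < a * l x := mul_lt_mul_of_pos_left hlt ha
  have hly : b * l v ≤ b * l y := mul_le_mul_of_nonneg_left (hle y hy) hb.le
  have hlv : a * l x + b * l y = a * l v + b * l v := by
    rw [← add_mul, hab, one_mul, ← hxy]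
    simp
  linarith

end HullVertices

/-! ### Lattice points above the graph of a convex function -/

/-- A second difference of at least `2 * δ` leaves room for a line through `(x, f x + δ)` which
stays below the graph of `f` at distance at least `d` from `x`. -/
lemma exists_slope_of_two_mul_le_secondDifference {s : Set ℝ} {f : ℝ → ℝ} (hf : ConvexOn ℝ s f)
    {x d δ : ℝ} (hd : 0 < d) (hδ : 0 ≤ δ) (hx : x ∈ s) (hxd : x + d ∈ s)
    (hsecond : x - d ∈ s → 2 * δ ≤ f (x + d) - 2 * f x + f (x - d)) :
    ∃ m : ℝ, ∀ x' ∈ s, d ≤ |x' - x| → f x + δ + m * (x' - x) ≤ f x' := by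
  refine ⟨(f (x + d) - f x - δ) / d, fun x' hx' hdist => ?_⟩
  rcases le_abs.1 hdist with hright | hleft
  · have hsec := hf.secant_mono hx hxd hx' (by linarith) (by linarith) (by linarith)
    rw [add_sub_cancel_left, div_le_div_iff₀ hd (by linarith)] at hsec
    rw [← le_sub_iff_add_le', div_mul_eq_mul_div, div_le_iff₀ hd]
    nlinarith
  · have hxd' : x - d ∈ s := hf.1.ordConnected.out hx' hx ⟨by linarith, by linarith⟩
    have hsec := hf.secant_mono hx hx' hxd' (by linarith) (by linarith) (by linarith)
    rw [← neg_div_neg_eq, ← neg_div_neg_eq (f (x - d) - f x), div_le_div_iff₀ (by linarith)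
      (by linarith)] at hsec
    rw [← le_sub_iff_add_le', div_mul_eq_mul_div, div_le_iff₀ hd]
    have hnonneg : 0 ≤ x - x' := by linarith
    nlinarith [mul_le_mul_of_nonneg_right (hsecond hxd') hnonneg]

/-- The part over `s` of the epigraph of `f`, as a region of the plane. -/
def epigraphOn (s : Set ℝ) (f : ℝ → ℝ) : Set (ℝ × ℝ) := {z | z.1 ∈ s ∧ f z.1 ≤ z.2}

/-- A planar set made of equally spaced vertical columns: the abscissae are `α + k * d` with
`k : ℤ`, and the `k`-th column is the coset `y k + δ ℤ`. In asymptote coordinates the integer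
lattice has this form. -/
def columns (α d δ : ℝ) (y : ℤ → ℝ) : Set (ℝ × ℝ) :=
  {z | ∃ k j : ℤ, z = (α + k * d, y k + j * δ)}

section Columns

variable {α d δ : ℝ} {y : ℤ → ℝ} {s : Set ℝ} {f : ℝ → ℝ}

lemma columns_abs : columns α d |δ| y = columns α d δ y := by
  rcases abs_choice δ with h | h
  · rw [h]
  · rw [h]
    ext z
    refine exists_congr fun k => ⟨?_, ?_⟩ <;> rintro ⟨j, rfl⟩ <;> exact ⟨-j, by simp⟩

lemma exists_mem_hullVertices_of_two_mul_le_secondDifference (hf : ConvexOn ℝ s f)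
    (hd : 0 < d) (hδ : 0 < δ) {k : ℤ} (hk : α + k * d ∈ s) (hkd : α + k * d + d ∈ s)
    (hsecond : α + k * d - d ∈ s →
      2 * δ ≤ f (α + k * d + d) - 2 * f (α + k * d) + f (α + k * d - d)) :
    ∃ v ∈ hullVertices (epigraphOn s f ∩ columns α d δ y), v.1 = α + k * d := by
  obtain ⟨m, hm⟩ := exists_slope_of_two_mul_le_secondDifference hf hd hδ.le hk hkd hsecond
  set X := α + k * d with hX
  set j : ℤ := ⌈(f X - y k) / δ⌉ with hj
  have hle : f X ≤ y k + j * δ := by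
    linarith [(div_le_iff₀ hδ).1 (Int.le_ceil ((f X - y k) / δ))]
  have hlt : y k + j * δ < f X + δ := by
    have := Int.ceil_lt_add_one ((f X - y k) / δ)
    rw [← hj, ← sub_lt_iff_lt_add, lt_div_iff₀ hδ] at this
    linarith
  refine ⟨(X, y k + j * δ), mem_hullVertices_of_forall_lt
    (LinearMap.snd ℝ ℝ ℝ - m • LinearMap.fst ℝ ℝ ℝ) ⟨⟨hk, hle⟩, k, j, rfl⟩ ?_, rfl⟩
  rintro _ ⟨⟨hs, hfz⟩, k', j', rfl⟩ hne
  simp only [LinearMap.sub_apply, LinearMap.smul_apply, LinearMap.snd_apply, LinearMap.fst_apply,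
    smul_eq_mul] at hs hfz ⊢
  rcases eq_or_ne k' k with rfl | hkk'
  · have hjj' : j < j' := by
      refine lt_of_le_of_ne (Int.ceil_le.2 ?_) fun h => hne (by rw [h])
      rw [div_le_iff₀ hδ]
      linarith
    have : (j : ℝ) < j' := mod_cast hjj'
    gcongr
  · have hdist : d ≤ |α + k' * d - X| := by
      have hone : (1 : ℝ) ≤ |(k' : ℝ) - k| := mod_cast Int.one_le_abs (sub_ne_zero.2 hkk')
      rw [hX, add_sub_add_left_eq_sub, ← sub_mul, abs_mul, abs_of_pos hd]
      exact le_mul_of_one_le_left hd.le hone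
    linarith [hm _ hs hdist]

lemma snd_lt_of_mem_hullVertices (hδ : 0 < δ) {v : ℝ × ℝ}
    (hv : v ∈ hullVertices (epigraphOn s f ∩ columns α d δ y)) : v.2 < f v.1 + δ := by
  obtain ⟨⟨hs, hfv⟩, k, j, rfl⟩ := hullVertices_subset _ hv
  by_contra! hle
  have hmem : ∀ i : ℤ, f (α + k * d) ≤ y k + i * δ → ((α + k * d, y k + i * δ) : ℝ × ℝ) ∈
      convexHull ℝ (epigraphOn s f ∩ columns α d δ y) :=
    fun i hi => subset_convexHull ℝ _ ⟨⟨hs, hi⟩, k, i, rfl⟩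
  have hbelow := hmem (j - 1) (by push_cast; linarith)
  have habove := hmem (j + 1) (by push_cast; linarith)
  have heq := hv.2 hbelow habove
    ⟨1 / 2, 1 / 2, by norm_num, by norm_num, by norm_num, by ext <;> simp <;> ring⟩
  have := congrArg Prod.snd heq
  push_cast at this
  linarith

lemma injOn_fst_hullVertices (hd : d ≠ 0) (hδ : 0 < δ) :
    InjOn Prod.fst (hullVertices (epigraphOn s f ∩ columns α d δ y)) := by
  intro v hv w hw hvw
  have hvlt := snd_lt_of_mem_hullVertices hδ hv
  have hwlt := snd_lt_of_mem_hullVertices hδ hw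
  obtain ⟨⟨-, hvle⟩, k, i, rfl⟩ := hullVertices_subset _ hv
  obtain ⟨⟨-, hwle⟩, k', j, rfl⟩ := hullVertices_subset _ hw
  obtain rfl : k = k' := by simpa [hd] using hvw
  simp only at hvlt hwlt hvle hwle
  have hij : (i : ℝ) < j + 1 := lt_of_mul_lt_mul_right (by linarith) hδ.le
  have hji : (j : ℝ) < i + 1 := lt_of_mul_lt_mul_right (by linarith) hδ.le
  norm_cast at hij hji
  rw [show i = j by lia]

end Columns

lemma add_intCast_mul_mem_Ioc_iff {α d c : ℝ} (hd : 0 < d) {k : ℤ} :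
    α + k * d ∈ Ioc 0 c ↔ k ∈ Ioc ⌊-α / d⌋ ⌊(c - α) / d⌋ := by
  rw [mem_Ioc, mem_Ioc, Int.floor_lt, Int.le_floor, div_lt_iff₀ hd, le_div_iff₀ hd,
    neg_lt_iff_pos_add', le_sub_iff_add_le']

lemma exists_pos_forall_le_add_intCast_mul {d : ℝ} (hd : 0 < d) (α : ℝ) :
    ∃ m > 0, ∀ k : ℤ, 0 < α + k * d → m ≤ α + k * d := by
  have hiff : ∀ k : ℤ, 0 < α + k * d ↔ ⌊-α / d⌋ < k := by
    intro k
    rw [Int.floor_lt, div_lt_iff₀ hd, neg_lt_iff_pos_add']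
  refine ⟨α + (⌊-α / d⌋ + 1 : ℤ) * d, (hiff _).2 (lt_add_one _), fun k hk => ?_⟩
  gcongr
  exact (hiff k).1 hk

/-! ### Vertices near the asymptotes of a hyperbola -/

/-- The convex region bounded by the branch of the hyperbola `X * Y = N` in the open first
quadrant. -/
def hyperbolaRegion (N : ℝ) : Set (ℝ × ℝ) := epigraphOn (Ioi 0) (N / ·)

lemma mem_hyperbolaRegion_iff {N : ℝ} {z : ℝ × ℝ} :
    z ∈ hyperbolaRegion N ↔ 0 < z.1 ∧ N ≤ z.1 * z.2 :=
  and_congr_right fun hz => div_le_iff₀' hz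

lemma image_swap_hyperbolaRegion {N : ℝ} (hN : 0 < N) :
    Prod.swap '' hyperbolaRegion N = hyperbolaRegion N := by
  ext ⟨X, Y⟩
  simp only [image_swap_eq_preimage_swap, mem_preimage, Prod.swap_prod_mk,
    mem_hyperbolaRegion_iff, mul_comm Y X]
  refine and_congr_left fun hXY => ⟨fun hY => ?_, fun hX => ?_⟩
  · exact pos_of_mul_pos_left (hN.trans_le hXY) hY.le
  · exact pos_of_mul_pos_right (hN.trans_le hXY) hX.le

lemma image_swap_hullVertices_hyperbolaRegion {N : ℝ} (hN : 0 < N) (S : Set (ℝ × ℝ)) :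
    Prod.swap '' hullVertices (hyperbolaRegion N ∩ S) =
      hullVertices (hyperbolaRegion N ∩ Prod.swap '' S) := by
  have himage := hullVertices_image (LinearEquiv.prodComm ℝ ℝ ℝ).toLinearMap.toAffineMap
    (LinearEquiv.prodComm ℝ ℝ ℝ).injective (hyperbolaRegion N ∩ S)
  change hullVertices (Prod.swap '' _) = Prod.swap '' _ at himage
  rw [← himage, image_inter Prod.swap_injective, image_swap_hyperbolaRegion hN]

lemma convexOn_const_div {N : ℝ} (hN : 0 ≤ N) : ConvexOn ℝ (Ioi 0) (N / ·) := by
  simpa [div_eq_mul_inv] using (convexOn_zpow (𝕜 := ℝ) (-1)).smul hN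

lemma two_mul_le_secondDifference_const_div {N X d δ : ℝ} (hd : 0 ≤ d) (hN : 0 ≤ N)
    (hdX : 0 < X - d) (hcubic : δ * X ^ 3 ≤ N * d ^ 2) :
    2 * δ ≤ N / (X + d) - 2 * (N / X) + N / (X - d) := by
  have hX : 0 < X := by linarith
  calc 2 * δ ≤ 2 * (N * d ^ 2 / X ^ 3) := by
        gcongr
        rwa [le_div_iff₀ (by positivity)]
    _ ≤ 2 * (N * d ^ 2 / (X * ((X + d) * (X - d)))) := by
        gcongr
        nlinarith [mul_nonneg hX.le (sq_nonneg d)]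
    _ = N / (X + d) - 2 * (N / X) + N / (X - d) := by
        field_simp
        ring

section Counting

variable {α d δ N : ℝ} {y : ℤ → ℝ}

lemma exists_mem_hullVertices_hyperbolaRegion {t : ℝ} (hd : 0 < d) (hδ : 0 < δ) (hN : 0 < N)
    (ht : d * δ * t ^ 3 = N) {k : ℤ} (hk : α + k * d ∈ Ioc 0 (d * t)) :
    ∃ v ∈ hullVertices (hyperbolaRegion N ∩ columns α d δ y), v.1 = α + k * d := by
  have hcubic : δ * (α + k * d) ^ 3 ≤ N * d ^ 2 :=
    calc δ * (α + k * d) ^ 3 ≤ δ * (d * t) ^ 3 := by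
          have := hk.1.le
          gcongr
          exact hk.2
      _ = N * d ^ 2 := by rw [← ht]; ring
  exact exists_mem_hullVertices_of_two_mul_le_secondDifference (convexOn_const_div hN.le) hd hδ
    hk.1 (add_pos hk.1 hd) fun hkd => two_mul_le_secondDifference_const_div hd.le hN.le hkd hcubic

lemma sub_one_lt_ncard_hullVertices_fst_le {t : ℝ} (hd : 0 < d) (hδ : 0 < δ) (hN : 0 < N)
    (ht : d * δ * t ^ 3 = N)
    (hfin : (hullVertices (hyperbolaRegion N ∩ columns α d δ y)).Finite) :
    t - 1 < {v ∈ hullVertices (hyperbolaRegion N ∩ columns α d δ y) | v.1 ≤ d * t}.ncard := by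
  set V := {v ∈ hullVertices (hyperbolaRegion N ∩ columns α d δ y) | v.1 ≤ d * t}
  set I := Finset.Ioc ⌊-α / d⌋ ⌊(d * t - α) / d⌋
  have himage : (fun k : ℤ => α + k * d) '' I ⊆ Prod.fst '' V := by
    rintro _ ⟨k, hkI, rfl⟩
    have hk := (add_intCast_mul_mem_Ioc_iff hd).2 (Finset.mem_Ioc.1 hkI)
    obtain ⟨v, hv, hvk⟩ := exists_mem_hullVertices_hyperbolaRegion hd hδ hN ht hk
    exact ⟨v, ⟨hv, hvk.trans_le hk.2⟩, hvk⟩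
  have hinj : Function.Injective fun k : ℤ => α + k * d := fun k l hkl => by
    simpa [hd.ne'] using hkl
  have hVfin : V.Finite := hfin.subset (sep_subset _ _)
  have hcard : I.card ≤ V.ncard :=
    calc I.card = ((fun k : ℤ => α + k * d) '' I).ncard := by
          rw [ncard_image_of_injective _ hinj, ncard_coe_finset]
      _ ≤ (Prod.fst '' V).ncard := ncard_le_ncard himage (hVfin.image _)
      _ ≤ V.ncard := ncard_image_le hVfin
  have hfloor : ⌊(d * t - α) / d⌋ - ⌊-α / d⌋ ≤ (V.ncard : ℤ) := by
    rw [Int.card_Ioc] at hcard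
    lia
  calc t - 1 = (d * t - α) / d - 1 - -α / d := by field_simp; ring
    _ < ⌊(d * t - α) / d⌋ - ⌊-α / d⌋ := by
        linarith [Int.sub_one_lt_floor ((d * t - α) / d), Int.floor_le (-α / d)]
    _ ≤ V.ncard := mod_cast hfloor

variable {α' d' δ' : ℝ} {y' : ℤ → ℝ} {S : Set (ℝ × ℝ)}

/-- The abscissa of a vertex is bounded because its ordinate is bounded below by a positive
constant. -/
lemma finite_hullVertices_hyperbolaRegion (hS : S = columns α d δ y)
    (hS' : Prod.swap '' S = columns α' d' δ' y') (hd : 0 < d) (hδ : 0 < δ) (hd' : 0 < d')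
    (hδ' : 0 < δ') (hN : 0 < N) : (hullVertices (hyperbolaRegion N ∩ S)).Finite := by
  obtain ⟨m, hm, hmle⟩ := exists_pos_forall_le_add_intCast_mul hd' α'
  have hbound : ∀ v ∈ hullVertices (hyperbolaRegion N ∩ S), v.1 ≤ N / m + δ' := by
    intro v hv
    have hv' : v.swap ∈ hullVertices (hyperbolaRegion N ∩ columns α' d' δ' y') := by
      rw [← hS', ← image_swap_hullVertices_hyperbolaRegion hN]
      exact mem_image_of_mem _ hv
    obtain ⟨⟨hpos, -⟩, k, j, hkj⟩ := hullVertices_subset _ hv'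
    have hlt : v.1 < N / v.2 + δ' := snd_lt_of_mem_hullVertices hδ' hv'
    have hv2 : v.2 = α' + k * d' := congrArg Prod.fst hkj
    have hmv : m ≤ v.2 := hv2 ▸ hmle k (hv2 ▸ hpos)
    exact hlt.le.trans (by gcongr)
  subst hS
  refine Set.Finite.of_finite_image ?_ (injOn_fst_hullVertices hd.ne' hδ)
  refine ((finite_Ioc ⌊-α / d⌋ ⌊(N / m + δ' - α) / d⌋).image fun k : ℤ => α + k * d).subset ?_
  rintro _ ⟨v, hv, rfl⟩
  have hle := hbound v hv
  obtain ⟨⟨hpos, -⟩, k, j, rfl⟩ := hullVertices_subset _ hv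
  exact ⟨k, (add_intCast_mul_mem_Ioc_iff hd).1 ⟨hpos, hle⟩, rfl⟩

lemma disjoint_hyperbolaRegion_fst_le_snd_le {t : ℝ} (hd : 0 < d) (hδ : 0 < δ) (hN : 0 < N)
    (ht1 : 1 < t) (ht : d * δ * t ^ 3 = N) :
    Disjoint {v ∈ hyperbolaRegion N | v.1 ≤ d * t} {v ∈ hyperbolaRegion N | v.2 ≤ δ * t} := by
  rw [disjoint_left]
  rintro v ⟨hv, hv1⟩ ⟨-, hv2⟩
  obtain ⟨hpos, hNv⟩ := mem_hyperbolaRegion_iff.1 hv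
  have hpos2 : 0 < v.2 := pos_of_mul_pos_right (hN.trans_le hNv) hpos.le
  have : N < N :=
    calc N ≤ v.1 * v.2 := hNv
      _ ≤ (d * t) * (δ * t) := by gcongr
      _ = d * δ * t ^ 2 := by ring
      _ < d * δ * t ^ 3 := by gcongr; norm_num
      _ = N := ht
  exact this.false

theorem two_mul_sub_two_le_ncard_hullVertices (hS : S = columns α d δ y)
    (hS' : Prod.swap '' S = columns α' d' δ' y') (hd : 0 < d) (hδ : 0 < δ) (hd' : 0 < d')
    (hδ' : 0 < δ') (hdδ : d * δ = d' * δ') (hd'δ : d' ≤ δ) (hN : 0 < N) :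
    2 * (N / (d * δ)) ^ (1 / 3 : ℝ) - 2 ≤ (hullVertices (hyperbolaRegion N ∩ S)).ncard := by
  have hfin := finite_hullVertices_hyperbolaRegion hS hS' hd hδ hd' hδ' hN
  set V := hullVertices (hyperbolaRegion N ∩ S) with hV
  set t := (N / (d * δ)) ^ (1 / 3 : ℝ)
  have ht : d * δ * t ^ 3 = N := by
    rw [← Real.rpow_natCast, ← Real.rpow_mul (by positivity)]
    norm_num
    field_simp
  rcases le_or_gt t 1 with ht1 | ht1
  · linarith [(V.ncard.cast_nonneg : (0 : ℝ) ≤ V.ncard)]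
  have hleft : t - 1 < {v ∈ V | v.1 ≤ d * t}.ncard := by
    rw [hV, hS] at hfin ⊢
    exact sub_one_lt_ncard_hullVertices_fst_le hd hδ hN ht hfin
  have hright : t - 1 < {v ∈ V | v.2 ≤ d' * t}.ncard := by
    have hswap : Prod.swap '' V = hullVertices (hyperbolaRegion N ∩ columns α' d' δ' y') := by
      rw [hV, image_swap_hullVertices_hyperbolaRegion hN, hS']
    have himage : {v ∈ Prod.swap '' V | v.1 ≤ d' * t} = Prod.swap '' {v ∈ V | v.2 ≤ d' * t} := by
      simp only [image_swap_eq_preimage_swap]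
      rfl
    rw [← ncard_image_of_injective _ Prod.swap_injective, ← himage, hswap]
    exact sub_one_lt_ncard_hullVertices_fst_le hd' hδ' hN (hdδ ▸ ht) (hswap ▸ hfin.image _)
  have hdisj : Disjoint {v ∈ V | v.1 ≤ d * t} {v ∈ V | v.2 ≤ d' * t} := by
    refine (disjoint_hyperbolaRegion_fst_le_snd_le hd hδ hN ht1 ht).mono ?_ ?_
    · exact fun v hv => ⟨(hullVertices_subset _ hv.1).1, hv.2⟩
    · exact fun v hv => ⟨(hullVertices_subset _ hv.1).1, hv.2.trans (by gcongr)⟩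
  have hcard : {v ∈ V | v.1 ≤ d * t}.ncard + {v ∈ V | v.2 ≤ d' * t}.ncard ≤ V.ncard := by
    rw [← ncard_union_eq hdisj (hfin.subset (sep_subset _ _)) (hfin.subset (sep_subset _ _))]
    exact ncard_le_ncard (union_subset (sep_subset _ _) (sep_subset _ _)) hfin
  have : (_ : ℝ) ≤ V.ncard := Nat.cast_le.2 hcard
  push_cast at this
  linarith

end Counting

/-! ### Integral linear factors of the quadratic form -/

lemma exists_four_factors {M : Type*} [CommMonoidWithZero M] [IsCancelMulZero M]
    [DecompositionMonoid M] {a c e f : M} (h : a * c = e * f) :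
    ∃ p q r s : M, a = p * r ∧ c = q * s ∧ e = p * s ∧ f = q * r := by
  rcases eq_or_ne a 0 with rfl | ha
  · rcases mul_eq_zero.1 (h.symm.trans (zero_mul c)) with rfl | rfl
    · exact ⟨0, 1, f, c, by simp⟩
    · exact ⟨e, c, 0, 1, by simp⟩
  · obtain ⟨p, r, ⟨s, rfl⟩, ⟨q, rfl⟩, rfl⟩ := exists_dvd_and_dvd_of_dvd_mul (Dvd.intro c h)
    refine ⟨p, q, r, s, rfl, mul_left_cancel₀ ha ?_, rfl, mul_comm r q⟩
    rw [h, mul_mul_mul_comm, mul_comm q s]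

lemma exists_linear_factors_of_sq_eq_discrim {a b c Δ : ℤ} (h : Δ ^ 2 = discrim a b c) :
    ∃ p q r s : ℤ, a = p * r ∧ b = p * s + q * r ∧ c = q * s ∧ p * s - q * r = Δ := by
  rw [discrim] at h
  have heven : Even (b + Δ) := by
    have hsq : Even (b ^ 2 - Δ ^ 2) := ⟨2 * (a * c), by linear_combination -h⟩
    rw [sq_sub_sq, Int.even_mul, Int.even_sub, ← Int.even_add, or_self] at hsq
    exact hsq
  obtain ⟨e, he⟩ := heven
  obtain ⟨p, q, r, s, hpr, hqs, hps, hqr⟩ := exists_four_factors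
    (show a * c = e * (b - e) by
      obtain rfl : Δ = 2 * e - b := by linarith
      linarith)
  exact ⟨p, q, r, s, hpr, by linarith, hqs, by linarith⟩

/-- Exchanging the factors and changing a sign, or changing both signs, keeps the determinant. -/
lemma exists_signed_linear_factors {a b c Δ : ℤ} (h : Δ ^ 2 = discrim a b c) {n : ℝ} (hn : n ≠ 0)
    (u₀ v₀ : ℝ) :
    ∃ p q r s : ℤ, p * s - q * r = Δ ∧ 0 ≤ p * u₀ + q * v₀ ∧ ∀ u v : ℝ,
      (p * u + q * v) * (r * u + s * v) = |n| ↔ a * u ^ 2 + b * u * v + c * v ^ 2 = n := by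
  obtain ⟨p, q, r, s, hdet, hfactor⟩ : ∃ p q r s : ℤ, p * s - q * r = Δ ∧ ∀ u v : ℝ,
      (p * u + q * v) * (r * u + s * v) = |n| ↔ a * u ^ 2 + b * u * v + c * v ^ 2 = n := by
    obtain ⟨p, q, r, s, rfl, rfl, rfl, hdet⟩ := exists_linear_factors_of_sq_eq_discrim h
    push_cast
    rcases hn.lt_or_gt with hneg | hpos
    · refine ⟨-r, -s, p, q, by linarith, fun u v => ?_⟩
      rw [abs_of_neg hneg]
      push_cast
      constructor <;> intro heq <;> linear_combination -heq
    · refine ⟨p, q, r, s, hdet, fun u v => ?_⟩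
      rw [abs_of_pos hpos]
      constructor <;> intro heq <;> linear_combination heq
  rcases le_total 0 (p * u₀ + q * v₀) with hnonneg | hnonpos
  · exact ⟨p, q, r, s, hdet, hnonneg, hfactor⟩
  · refine ⟨-p, -q, -r, -s, by linarith, by push_cast; linarith, fun u v => ?_⟩
    rw [← hfactor]
    push_cast
    constructor <;> intro heq <;> linear_combination heq

/-- The affine coordinates on the plane with origin `o` whose linear parts are `p x + q y` and
`r x + s y`. When these forms are the factors of the quadratic form, the coordinate axes are the
asymptotes of the hyperbola. -/
def factorCoords (p q r s : ℤ) (o z : ℝ × ℝ) : ℝ × ℝ :=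
  (p * (z.1 - o.1) + q * (z.2 - o.2), r * (z.1 - o.1) + s * (z.2 - o.2))

lemma exists_continuousAffineEquiv_eq_factorCoords {p q r s : ℤ} (h : p * s - q * r ≠ 0)
    (o : ℝ × ℝ) : ∃ φ : (ℝ × ℝ) ≃ᴬ[ℝ] ℝ × ℝ, ⇑φ = factorCoords p q r s o := by
  have hD : (p * s - q * r : ℝ) ≠ 0 := mod_cast h
  let L : (ℝ × ℝ) →ₗ[ℝ] ℝ × ℝ :=
    LinearMap.prod (p • LinearMap.fst ℝ ℝ ℝ + q • LinearMap.snd ℝ ℝ ℝ)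
      (r • LinearMap.fst ℝ ℝ ℝ + s • LinearMap.snd ℝ ℝ ℝ)
  have hinj : Function.Injective L := by
    rw [injective_iff_map_eq_zero]
    rintro ⟨u, v⟩ hL
    obtain ⟨h1, h2⟩ : p * u + q * v = 0 ∧ r * u + s * v = 0 := by simpa [L] using hL
    ext
    · exact (mul_eq_zero.1 (by linear_combination s * h1 - q * h2)).resolve_left hD
    · exact (mul_eq_zero.1 (by linear_combination p * h2 - r * h1)).resolve_left hD
  refine ⟨((AffineEquiv.vaddConst ℝ o).symm.trans
    (LinearEquiv.ofInjectiveEndo L hinj).toAffineEquiv).toContinuousAffineEquiv, ?_⟩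
  ext z <;> simp [L, factorCoords]

lemma image_swap_image_factorCoords (p q r s : ℤ) (o : ℝ × ℝ) (S : Set (ℝ × ℝ)) :
    Prod.swap '' (factorCoords p q r s o '' S) = factorCoords r s p q o '' S :=
  image_image _ _ _

/-- A Bézout vector for `(p, q)` moves from one column to the next, and the primitive vector
orthogonal to `(p, q)` moves along a column. -/
lemma exists_image_intLattice_eq_columns {p q r s : ℤ} (h : p * s - q * r ≠ 0) (o : ℝ × ℝ) :
    ∃ (α δ : ℝ) (y : ℤ → ℝ), 0 < δ ∧ Int.gcd p q * δ = (|p * s - q * r| : ℤ) ∧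
      factorCoords p q r s o '' intLattice = columns α (Int.gcd p q) δ y := by
  have hgcd : 0 < Int.gcd p q := Int.gcd_pos_iff.2 (by grind)
  obtain ⟨p', q', hcop, hp, hq⟩ := Int.exists_gcd_one hgcd
  set d := Int.gcd p q
  obtain ⟨u, v, huv⟩ := Int.isCoprime_iff_gcd_eq_one.2 hcop
  have huv' : (u * p' + v * q' : ℝ) = 1 := mod_cast huv
  have hp' : (p : ℝ) = p' * d := mod_cast hp
  have hq' : (q : ℝ) = q' * d := mod_cast hq
  have hdet : (d : ℝ) * (p' * s - q' * r) = p * s - q * r := by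
    rw [hp', hq']
    ring
  have hdet0 : (p' * s - q' * r : ℝ) ≠ 0 :=
    right_ne_zero_of_mul (a := (d : ℝ)) (by rw [hdet]; exact_mod_cast h)
  refine ⟨-(p * o.1 + q * o.2), |(p' * s - q' * r : ℝ)|,
    fun k => k * (r * u + s * v) - (r * o.1 + s * o.2), abs_pos.2 hdet0, ?_, ?_⟩
  · push_cast
    rw [← hdet, abs_mul, Nat.abs_cast]
  rw [columns_abs]
  ext z
  constructor
  · rintro ⟨_, ⟨i, j, rfl⟩, rfl⟩
    refine ⟨p' * i + q' * j, u * j - v * i, ?_⟩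
    ext <;> simp only [factorCoords, hp', hq'] <;> push_cast
    · ring
    · linear_combination -(r * i + s * j) * huv'
  · rintro ⟨k, j, rfl⟩
    refine ⟨_, ⟨k * u - j * q', k * v + j * p', rfl⟩, ?_⟩
    ext <;> simp only [factorCoords, hp', hq'] <;> push_cast
    · linear_combination k * d * huv'
    · ring

lemma two_mul_sub_two_le_ncard_hullVertices_factorCoords {p q r s : ℤ} (h : p * s - q * r ≠ 0)
    (o : ℝ × ℝ) {N : ℝ} (hN : 0 < N) :
    2 * (N / (|p * s - q * r| : ℤ)) ^ (1 / 3 : ℝ) - 2 ≤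
      (hullVertices (hyperbolaRegion N ∩ factorCoords p q r s o '' intLattice)).ncard := by
  have h' : r * q - s * p ≠ 0 := by
    contrapose! h
    linarith
  have hgcd : 0 < Int.gcd p q := Int.gcd_pos_iff.2 (by grind)
  have hgcd' : 0 < Int.gcd r s := Int.gcd_pos_iff.2 (by grind)
  obtain ⟨α, δ, y, hδ, hdδ, hS⟩ := exists_image_intLattice_eq_columns h o
  obtain ⟨α', δ', y', hδ', hdδ', hS'⟩ := exists_image_intLattice_eq_columns h' o
  have hgcds : (Int.gcd p q * Int.gcd r s : ℤ) ≤ |p * s - q * r| :=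
    Int.le_of_dvd (abs_pos.2 h) <| (dvd_abs _ _).2 <|
      dvd_sub (mul_dvd_mul (Int.gcd_dvd_left ..) (Int.gcd_dvd_right ..))
        (mul_dvd_mul (Int.gcd_dvd_right ..) (Int.gcd_dvd_left ..))
  rw [← hdδ]
  refine two_mul_sub_two_le_ncard_hullVertices hS
    ((image_swap_image_factorCoords ..).trans hS') (mod_cast hgcd) hδ (mod_cast hgcd') hδ' ?_ ?_ hN
  · rw [hdδ, hdδ', ← abs_neg]
    ring_nf
  · refine le_of_mul_le_mul_left ?_ (Nat.cast_pos.2 hgcd)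
    rw [hdδ]
    exact_mod_cast hgcds

/-! ### Components of the complement of a hyperbola -/

/-- Otherwise the component contains `(2 * N, 0)` and `(0, 2)`, but not their midpoint. -/
lemma lt_mul_of_convex_connectedComponentIn {N : ℝ} (hN : 0 < N) {x : ℝ × ℝ}
    (hx : x.1 * x.2 ≠ N)
    (hconv : Convex ℝ (connectedComponentIn {z : ℝ × ℝ | z.1 * z.2 ≠ N} x)) : N < x.1 * x.2 := by
  by_contra! hle
  set M : Set (ℝ × ℝ) := {z | z.1 * z.2 < N}
  have hstar : StarConvex ℝ 0 M := by
    rw [starConvex_zero_iff]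
    intro z hz a ha ha1
    have hz' : z.1 * z.2 < N := hz
    have hsq : a ^ 2 ≤ 1 := pow_le_one₀ ha ha1
    change a * z.1 * (a * z.2) < N
    rw [mul_mul_mul_comm, ← sq]
    rcases le_total (z.1 * z.2) 0 with hneg | hpos
    · exact (mul_nonpos_of_nonneg_of_nonpos (sq_nonneg a) hneg).trans_lt hN
    · exact (mul_le_of_le_one_left hpos hsq).trans_lt hz'
  have hsub : M ⊆ connectedComponentIn {z : ℝ × ℝ | z.1 * z.2 ≠ N} x :=
    (hstar.isPathConnected (by simpa [M] using hN)).isConnected.isPreconnected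
      |>.subset_connectedComponentIn (lt_of_le_of_ne hle hx) fun z hz => ne_of_lt hz
  have hmid := hconv (hsub (by simpa [M] using hN : (2 * N, 0) ∈ M))
    (hsub (by simpa [M] using hN : (0, 2) ∈ M)) one_half_pos.le one_half_pos.le (add_halves 1)
  exact connectedComponentIn_subset _ _ hmid (by simp)

lemma connectedComponentIn_eq_strict_epigraph {N : ℝ} (hN : 0 < N) {x : ℝ × ℝ} (hx1 : 0 < x.1)
    (hx : N < x.1 * x.2) :
    connectedComponentIn {z : ℝ × ℝ | z.1 * z.2 ≠ N} x = {z | z.1 ∈ Ioi 0 ∧ N / z.1 < z.2} := by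
  have hconv := (convexOn_const_div hN.le).convex_strict_epigraph
  have hiff : {z : ℝ × ℝ | z.1 ∈ Ioi 0 ∧ N / z.1 < z.2} = {z | 0 < z.1 ∧ N < z.1 * z.2} :=
    ext fun z => and_congr_right fun hz => div_lt_iff₀' hz
  rw [hiff] at hconv ⊢
  refine Subset.antisymm ?_ <|
    hconv.isPreconnected.subset_connectedComponentIn ⟨hx1, hx⟩ fun z hz => ne_of_gt hz.2
  have hopen : IsOpen {z : ℝ × ℝ | 0 < z.1 ∧ N < z.1 * z.2} :=
    (isOpen_lt (by fun_prop) (by fun_prop)).and (isOpen_lt (by fun_prop) (by fun_prop))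
  have hopen' : IsOpen {z : ℝ × ℝ | z.1 * z.2 < N ∨ z.1 < 0} :=
    IsOpen.union (isOpen_lt (f := fun z : ℝ × ℝ => z.1 * z.2) (by fun_prop) continuous_const)
      (isOpen_lt continuous_fst continuous_const)
  refine isPreconnected_connectedComponentIn.subset_left_of_subset_union hopen hopen' ?_ ?_
    ⟨x, mem_connectedComponentIn hx.ne', hx1, hx⟩
  · rw [disjoint_left]
    rintro z ⟨hpos, hgt⟩ (hlt | hneg)
    exacts [hgt.not_gt hlt, hpos.not_gt hneg]
  · refine (connectedComponentIn_subset _ _).trans fun z hz => ?_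
    rcases lt_or_gt_of_ne hz with hlt | hgt
    · exact Or.inr (Or.inl hlt)
    · have hz1 : z.1 ≠ 0 := by
        intro h0
        rw [h0, zero_mul] at hgt
        exact hN.not_gt hgt
      rcases hz1.lt_or_gt with hneg | hpos
      exacts [Or.inr (Or.inr hneg), Or.inl ⟨hpos, hgt⟩]

lemma isClosed_hyperbolaRegion {N : ℝ} (hN : 0 < N) : IsClosed (hyperbolaRegion N) := by
  have heq : hyperbolaRegion N = {z | 0 ≤ z.1 ∧ N ≤ z.1 * z.2} := by
    ext z
    refine mem_hyperbolaRegion_iff.trans (and_congr_left fun hz => ⟨le_of_lt, fun h0 => ?_⟩)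
    refine h0.lt_of_ne fun h0 => hN.not_ge ?_
    rwa [← h0, zero_mul] at hz
  rw [heq]
  exact (isClosed_le (by fun_prop) (by fun_prop)).and (isClosed_le (by fun_prop) (by fun_prop))

lemma closure_strict_epigraph {N : ℝ} (hN : 0 < N) :
    closure {z : ℝ × ℝ | z.1 ∈ Ioi 0 ∧ N / z.1 < z.2} = hyperbolaRegion N := by
  refine Subset.antisymm
    (closure_minimal (fun z hz => ⟨hz.1, hz.2.le⟩) (isClosed_hyperbolaRegion hN)) ?_
  rintro ⟨X, Y⟩ ⟨hX, hY⟩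
  have htendsto : Filter.Tendsto (fun Y' => (X, Y')) (nhdsWithin Y (Ioi Y)) (nhds (X, Y)) :=
    tendsto_nhdsWithin_of_tendsto_nhds (by fun_prop : Continuous (Prod.mk X)).continuousAt
  refine mem_closure_of_tendsto htendsto ?_
  filter_upwards [self_mem_nhdsWithin] with Y' hY'
  exact ⟨hX, hY.trans_lt hY'⟩

lemma closure_connectedComponentIn_eq_hyperbolaRegion {N : ℝ} (hN : 0 < N) {x : ℝ × ℝ}
    (hx1 : 0 ≤ x.1) (hx : x.1 * x.2 ≠ N)
    (hconv : Convex ℝ (connectedComponentIn {z : ℝ × ℝ | z.1 * z.2 ≠ N} x)) :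
    closure (connectedComponentIn {z : ℝ × ℝ | z.1 * z.2 ≠ N} x) = hyperbolaRegion N := by
  have hlt := lt_mul_of_convex_connectedComponentIn hN hx hconv
  have hx1' : 0 < x.1 := hx1.lt_of_ne fun h0 => by
    rw [← h0, zero_mul] at hlt
    exact hN.not_gt hlt
  rw [connectedComponentIn_eq_strict_epigraph hN hx1' hlt, closure_strict_epigraph hN]

lemma image_connectedComponentIn_preimage {X Y : Type*} [TopologicalSpace X] [TopologicalSpace Y]
    (f : X ≃ₜ Y) {s : Set Y} {x : X} (hx : f x ∈ s) :
    f '' connectedComponentIn (f ⁻¹' s) x = connectedComponentIn s (f x) := by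
  rw [f.image_connectedComponentIn (mem_preimage.2 hx), f.image_preimage]

lemma image_closure_connectedComponentIn_eq_hyperbolaRegion {N : ℝ} (hN : 0 < N)
    (φ : (ℝ × ℝ) ≃ᴬ[ℝ] ℝ × ℝ) {x : ℝ × ℝ} (hx1 : 0 ≤ (φ x).1)
    (hx : φ x ∈ {z : ℝ × ℝ | z.1 * z.2 ≠ N})
    (hconv : Convex ℝ (connectedComponentIn (φ ⁻¹' {z | z.1 * z.2 ≠ N}) x)) :
    φ '' closure (connectedComponentIn (φ ⁻¹' {z | z.1 * z.2 ≠ N}) x) = hyperbolaRegion N := by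
  have himage := image_connectedComponentIn_preimage φ.toHomeomorph hx
  have hconvImage := hconv.affine_image φ.toAffineEquiv.toAffineMap
  calc φ '' closure (connectedComponentIn (φ ⁻¹' {z | z.1 * z.2 ≠ N}) x)
      = closure (φ '' connectedComponentIn (φ ⁻¹' {z | z.1 * z.2 ≠ N}) x) :=
        φ.toHomeomorph.image_closure _
    _ = closure (connectedComponentIn {z | z.1 * z.2 ≠ N} (φ x)) := congrArg closure himage
    _ = hyperbolaRegion N :=
        closure_connectedComponentIn_eq_hyperbolaRegion hN hx1 hx (himage ▸ hconvImage)

/-! ### The lower bound -/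

lemma sq_eq_discrim_of_eq_sqrt {a b c Δ : ℤ} (hΔ : 0 < Δ)
    (hdisc : (Δ : ℝ) = Real.sqrt ((b : ℝ) ^ 2 - 4 * (a : ℝ) * (c : ℝ))) :
    Δ ^ 2 = discrim a b c := by
  have hpos : (0 : ℝ) < Δ := mod_cast hΔ
  have hsq := (Real.sqrt_eq_iff_mul_self_eq_of_pos hpos).1 hdisc.symm
  rw [sq, discrim]
  exact_mod_cast hsq

/-- Lower bound `2 (|n|/Δ)^(1/3) - 2` on the number of vertices of the convex hull of
the integer points in the closure `H` of a convex connected component of the complement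
of a hyperbola with integer coefficients and positive integer discriminant `Δ`. -/
theorem statement2 (a b c Δ : ℤ) (hΔ : 0 < Δ)
    (hdisc : (Δ : ℝ) = Real.sqrt ((b : ℝ) ^ 2 - 4 * (a : ℝ) * (c : ℝ)))
    (x₀ y₀ n : ℝ) (hn : n ≠ 0)
    (x : ℝ × ℝ) (hx : x ∉ hypSet a b c x₀ y₀ n)
    (K : Set (ℝ × ℝ)) (hK : K = connectedComponentIn (hypSet a b c x₀ y₀ n)ᶜ x)
    (hKconv : Convex ℝ K)
    (H : Set (ℝ × ℝ)) (hH : H = closure K) :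
    2 * (|n| / (Δ : ℝ)) ^ ((1 : ℝ) / 3) - 2 ≤
      ((Set.extremePoints ℝ (convexHull ℝ (H ∩ intLattice))).ncard : ℝ) := by
  obtain ⟨p, q, r, s, hdet, hx1, hfactor⟩ := exists_signed_linear_factors
    (sq_eq_discrim_of_eq_sqrt hΔ hdisc) hn (x.1 - x₀) (x.2 - y₀)
  have hdet0 : p * s - q * r ≠ 0 := hdet ▸ hΔ.ne'
  obtain ⟨φ, hφ⟩ := exists_continuousAffineEquiv_eq_factorCoords hdet0 (x₀, y₀)
  have hpre : (hypSet a b c x₀ y₀ n)ᶜ = φ ⁻¹' {z | z.1 * z.2 ≠ |n|} := by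
    ext z
    rw [hφ]
    exact not_congr (hfactor (z.1 - x₀) (z.2 - y₀)).symm
  have hregion : φ '' H = hyperbolaRegion |n| := by
    rw [hK, hpre] at hKconv
    rw [hH, hK, hpre]
    exact image_closure_connectedComponentIn_eq_hyperbolaRegion (abs_pos.2 hn) φ (by rwa [hφ])
      (hpre.le hx) hKconv
  calc 2 * (|n| / Δ) ^ (1 / 3 : ℝ) - 2
      ≤ (hullVertices (hyperbolaRegion |n| ∩ φ '' intLattice)).ncard := by
        rw [hφ, ← abs_of_pos hΔ, ← hdet]
        exact two_mul_sub_two_le_ncard_hullVertices_factorCoords hdet0 _ (abs_pos.2 hn)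
    _ = (hullVertices (φ '' (H ∩ intLattice))).ncard := by rw [← hregion, image_inter φ.injective]
    _ = (hullVertices (H ∩ intLattice)).ncard :=
        congrArg Nat.cast (ncard_hullVertices_image φ.toAffineEquiv.toAffineMap φ.injective _)

end
end
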